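/- Assume N^{−1/2} ≪ ε_N ≪ N^{−1/3}. Then (Z_N/(2πN)^{d/2}) · 2πN · e^{N F(z)} · D_N(V_N; B_N) = [1 + o_N(1)] · μ/√(−det Hess F(z)) as N → ∞. -/

import Mathlib

open Real Filter Topology MeasureTheory RealInnerProductSpace
open scoped Classical

noncomputable section

namespace RWPotential

variable {d : ℕ}

/-- The ambient Euclidean space `ℝ^d`. -/
abbrev E (d : ℕ) := EuclideanSpace ℝ (Fin d)

/-- `x` belongs to the rescaled lattice `N⁻¹ ℤ^d`. -/
def IsLatticePoint (N : ℕ) (x : E d) : Prop := ∀ i, ∃ k : ℤ, x i = (k : ℝ) / N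

/-- The discretization `Ξ_N = Ξ ∩ (N⁻¹ ℤ^d)`. -/
def disc (Ξ : Set (E d)) (N : ℕ) : Set (E d) := {x ∈ Ξ | IsLatticePoint N x}

/-- The partition function `Z_N = Σ_{x ∈ Ξ_N} e^{-N F(x)}`. -/
def Z (Ξ : Set (E d)) (F : E d → ℝ) (N : ℕ) : ℝ :=
  ∑' x : disc Ξ N, Real.exp (-(N : ℝ) * F x)

/-- The Gibbs measure `μ_N(x) = Z_N⁻¹ e^{-N F(x)}`. -/
def gibbs (Ξ : Set (E d)) (F : E d → ℝ) (N : ℕ) (x : E d) : ℝ :=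
  Real.exp (-(N : ℝ) * F x) / Z Ξ F N

/-- The measure of a set `A ⊂ Ξ_N`. -/
def gibbsSet (Ξ : Set (E d)) (F : E d → ℝ) (N : ℕ) (A : Set (E d)) : ℝ :=
  ∑' x : A, gibbs Ξ F N (x : E d)

/-- The jump rates `R_N(x,y) = e^{-(1/2) N [F(y)-F(x)]}` for nearest neighbours of `Ξ_N`. -/
def rate (Ξ : Set (E d)) (F : E d → ℝ) (N : ℕ) (x y : E d) : ℝ :=
  if x ∈ disc Ξ N ∧ y ∈ disc Ξ N ∧ ‖y - x‖ = 1 / N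
  then Real.exp (-(N : ℝ) / 2 * (F y - F x)) else 0

/-- The holding rates `λ_N(x) = Σ_y R_N(x,y)`. -/
def lam (Ξ : Set (E d)) (F : E d → ℝ) (N : ℕ) (x : E d) : ℝ := ∑' y : E d, rate Ξ F N x y

/-- The capacity `Cap_N(A,B) = Σ_{x ∈ A} μ_N(x) λ_N(x) P_x[H_B < H⁺_A]`, expressed in terms of
the family `hit` of hitting probabilities of the chain, `hit N x A B = P_x[H_B < H⁺_A]`. -/
def cap (Ξ : Set (E d)) (F : E d → ℝ)
    (hit : ℕ → E d → Set (E d) → Set (E d) → ℝ) (N : ℕ) (A B : Set (E d)) : ℝ :=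
  ∑' x : A, gibbs Ξ F N (x : E d) * lam Ξ F N (x : E d) * hit N (x : E d) A B

/-- The Hessian matrix of `F` at `z`. -/
def hess (F : E d → ℝ) (z : E d) : Matrix (Fin d) (Fin d) ℝ :=
  fun i j => iteratedFDeriv ℝ 2 F z ![EuclideanSpace.single i (1:ℝ), EuclideanSpace.single j (1:ℝ)]

/-- The saddle points of `F` in `Ξ`: critical points which are neither local minima nor
local maxima. -/
def saddles (Ξ : Set (E d)) (F : E d → ℝ) : Set (E d) :=
  {z ∈ Ξ | fderiv ℝ F z = 0 ∧ ¬ IsLocalMin F z ∧ ¬ IsLocalMax F z}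

/-- The general setting: an open bounded domain `Ξ ⊂ ℝ^d` with smooth boundary, a twice
continuously differentiable potential `F` with finitely many critical points satisfying
hypotheses (H1)-(H4).  For a saddle point `z`, `-μs z` is the unique negative eigenvalue of
the Hessian of `F` at `z`, and `nvec` is the exterior normal field at the boundary. -/
structure PotentialSetting (d : ℕ) where
  Ξ : Set (E d)
  F : E d → ℝ
  μs : E d → ℝ
  nvec : E d → E d
  isOpen : IsOpen Ξ
  isBounded : Bornology.IsBounded Ξ
  smooth : ContDiffOn ℝ 2 F (closure Ξ)
  /-- (H1): the second derivatives of `F` are Lipschitz continuous. -/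
  hessLip : ∃ C : ℝ, ∀ i j : Fin d, ∀ x y : E d, |hess F x i j - hess F y i j| ≤ C * ‖x - y‖
  /-- `F` has finitely many critical points. -/
  finCrit : {z ∈ Ξ | fderiv ℝ F z = 0}.Finite
  /-- (H2): at local minima all eigenvalues of the Hessian are strictly positive. -/
  minHess : ∀ z ∈ Ξ, fderiv ℝ F z = 0 → IsLocalMin F z →
    ∀ t : ℝ, Module.End.HasEigenvalue (Matrix.toLin' (hess F z)) t → 0 < t
  /-- (H3): at saddle points the Hessian has the unique strictly negative eigenvalue
  `-μs z`, all other eigenvalues being strictly positive. -/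
  saddleHess : ∀ z ∈ saddles Ξ F,
    0 < μs z ∧ Module.End.HasEigenvalue (Matrix.toLin' (hess F z)) (-(μs z)) ∧
      ∀ t : ℝ, Module.End.HasEigenvalue (Matrix.toLin' (hess F z)) t → t = -(μs z) ∨ 0 < t
  nvec_unit : ∀ x ∈ frontier Ξ, ‖nvec x‖ = 1
  nvec_exterior : ∀ x ∈ frontier Ξ, ∀ᶠ t in 𝓝[>] (0:ℝ), x + t • nvec x ∉ closure Ξ
  /-- (H4): `∇F(x) ⋅ n(x) < 0` on the boundary of `Ξ`. -/
  grad_inward : ∀ x ∈ frontier Ξ, ⟪gradient F x, nvec x⟫ < (0:ℝ)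

/-- The setting of a fixed connected component `Ω = Ω^i_j` of `{F ≤ H_i}` (`H_i` being one of
the heights of the saddle points), decomposed into wells `W_1, …, W_ℓ`, together with the
parameter `ε ∈ (0, H_i - H_{i-1})` used to define the sets `ℰ^a_N`. -/
structure WellSetting (d : ℕ) extends PotentialSetting d where
  Hi : ℝ
  Ω : Set (E d)
  ℓ : ℕ
  W : Fin ℓ → Set (E d)
  ε : ℝ
  /-- `H_i` is the common height of the saddle points of level `i`. -/
  level_saddle : ∃ z ∈ saddles Ξ F, F z = Hi
  /-- `Ω` is a connected component of `{x ∈ Ξ : F(x) ≤ H_i}`. -/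
  comp : ∃ x₀ ∈ {x ∈ Ξ | F x ≤ Hi}, Ω = connectedComponentIn {x ∈ Ξ | F x ≤ Hi} x₀
  /-- `Ω` contains a saddle point of height `H_i`. -/
  comp_saddle : ∃ z ∈ saddles Ξ F, F z = Hi ∧ z ∈ Ω
  /-- each well is the closure of a connected component of the interior of `Ω`. -/
  well_comp : ∀ a, ∃ x ∈ interior Ω, W a = closure (connectedComponentIn (interior Ω) x)
  well_cover : (⋃ a, W a) = Ω
  well_inj : Function.Injective W
  εpos : 0 < ε
  /-- `ε < H_i - H_{i-1}`: all saddle points strictly below level `H_i` lie below `H_i - ε`. -/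
  εsmall : ∀ z ∈ saddles Ξ F, F z < Hi → F z < Hi - ε

namespace WellSetting

variable (S : WellSetting d)

/-- `W^ε_a = {x ∈ W_a : F(x) < H_i - ε}`. -/
def Wε (a : Fin S.ℓ) : Set (E d) := {x ∈ S.W a | S.F x < S.Hi - S.ε}

/-- `ℰ^a_N = W^ε_a ∩ Ξ_N`. -/
def well (N : ℕ) (a : Fin S.ℓ) : Set (E d) := S.Wε a ∩ disc S.Ξ N

/-- `ℰ_N(A) = ∪_{a ∈ A} ℰ^a_N`. -/
def wells (N : ℕ) (A : Finset (Fin S.ℓ)) : Set (E d) := ⋃ a ∈ A, S.well N a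

/-- `𝔖_{a,b}`, the saddle points separating `W_a` from `W_b`. -/
def sadBetween (a b : Fin S.ℓ) : Set (E d) := saddles S.Ξ S.F ∩ S.W a ∩ S.W b

/-- `𝔖(A)`, the saddle points separating `∪_{a∈A} W_a` from `∪_{a∉A} W_a`. -/
def sadSep (A : Finset (Fin S.ℓ)) : Set (E d) := ⋃ a ∈ A, ⋃ b ∈ Aᶜ, S.sadBetween a b

/-- The weight `ω(z) = μ(z)/√(-det Hess F(z))` of a saddle point `z`. -/
def ω (z : E d) : ℝ := S.μs z / Real.sqrt (-(hess S.F z).det)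

/-- The conductances `c(a,b) = Σ_{z ∈ 𝔖_{a,b}} μ(z)/√(-det Hess F(z))` of the graph `𝔾`. -/
def condG (a b : Fin S.ℓ) : ℝ := ∑' z : S.sadBetween a b, S.ω (z : E d)

end WellSetting

/-- The capacity (effective conductance) between `A` and `B` in the finite network on
`{1, …, ℓ}` with conductances `c`, defined through the Dirichlet variational principle. -/
def capNetwork (ℓ : ℕ) (c : Fin ℓ → Fin ℓ → ℝ) (A B : Finset (Fin ℓ)) : ℝ :=
  sInf {r : ℝ | ∃ f : Fin ℓ → ℝ, (∀ a ∈ A, f a = 1) ∧ (∀ b ∈ B, f b = 0) ∧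
    r = (1/2) * ∑ a : Fin ℓ, ∑ b : Fin ℓ, c a b * (f a - f b)^2}

namespace WellSetting

variable (S : WellSetting d)

/-- `Cap_𝔾(A,B)`: the capacity between `A` and `B` in the weighted graph `𝔾`. -/
def capG (A B : Finset (Fin S.ℓ)) : ℝ := capNetwork S.ℓ S.condG A B

/-- The local minima of `F` lying in the well `W_a`. -/
def minimaIn (a : Fin S.ℓ) : Set (E d) := {x ∈ S.W a ∩ S.Ξ | IsLocalMin S.F x}

/-- `h_a`, the minimal value of `F` on the local minima contained in `W_a`. -/
def hmin (a : Fin S.ℓ) : ℝ := sInf (S.F '' S.minimaIn a)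

/-- The deepest local minima `m_{a,1}, …, m_{a,q_a}` of the well `W_a`. -/
def deepMin (a : Fin S.ℓ) : Set (E d) := {x ∈ S.minimaIn a | S.F x = S.hmin a}

/-- `𝛍(a) = Σ_k (det Hess F(m_{a,k}))^{-1/2}`. -/
def μwell (a : Fin S.ℓ) : ℝ := ∑' x : S.deepMin a, 1 / Real.sqrt ((hess S.F (x : E d)).det)

/-- The depth `θ̂_a = H_i - h_a` of the well `W_a`. -/
def depth (a : Fin S.ℓ) : ℝ := S.Hi - S.hmin a

end WellSetting

/-- The outer (lattice) boundary of a set `B ⊂ Ξ_N`. -/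
def outerBoundary (Ξ : Set (E d)) (N : ℕ) (B : Set (E d)) : Set (E d) :=
  {x ∈ disc Ξ N | x ∉ B ∧ ∃ y ∈ B, ‖y - x‖ = 1 / N}

end RWPotential

namespace RWPotential

variable {d : ℕ}

/-- The approximate equilibrium potential profile
`f_N(r) = √(Nμ/2π) ∫_{-∞}^r e^{-(1/2)Nμ s²} ds` (here `c = Nμ`). -/
def fGauss (c : ℝ) (r : ℝ) : ℝ :=
  Real.sqrt (c / (2 * π)) * ∫ s in Set.Iio r, Real.exp (-(c / 2) * s ^ 2)

/-- The Dirichlet form of `f` restricted to the edges in `B`: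
`D_N(f; B) = Σ_{i=1}^d Σ_{x ∈ B} μ_N(x) R_N(x, x + e_i) [f(x + e_i) - f(x)]²`. -/
def dirichletRestricted (Ξ : Set (E d)) (F : E d → ℝ) (N : ℕ) (f : E d → ℝ)
    (B : Set (E d)) : ℝ :=
  ∑ i : Fin d, ∑' x : B, gibbs Ξ F N (x : E d) *
    rate Ξ F N (x : E d) ((x : E d) + (N : ℝ)⁻¹ • EuclideanSpace.single i (1:ℝ)) *
    (f ((x : E d) + (N : ℝ)⁻¹ • EuclideanSpace.single i (1:ℝ)) - f (x : E d)) ^ 2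

/-!
The Gibbs weight of an edge times its jump rate is symmetric in the two endpoints, so in the
variable `p = √N (x - z)` every edge term becomes a function of `p` and `p + N^{-1/2} e_i` alone. A
second order Taylor expansion at `z` together with the slope of the Gaussian profile in the
direction `v` turns it into a multiple of `exp (-(p ⬝ A p) / 2)`, where `A = Hess F(z) + 2μ vvᵀ` is
positive definite. The points `p` form a lattice of mesh `N^{-1/2}`, so the Dirichlet form is a
Riemann sum for a Gaussian integral with determinant `det A = -det Hess F(z)`. Edges at distance
much larger than `N^{-1/2}` from the saddle point contribute nothing, which is why any mesoscopic
neighbourhood gives the same limit.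
-/

section LatticeSums

variable {ι : Type*}

/-- The integer vector `k` as a point of Euclidean space, so that the points `N⁻¹ • intVec k` form
the lattice `N⁻¹ℤ^d`. -/
def intVec (k : ι → ℤ) : EuclideanSpace ℝ ι := WithLp.toLp 2 fun i => (k i : ℝ)

/-- The coordinatewise integer part; its fibres are the unit cells through which a sum over `ℤ^d`
becomes an integral. -/
def floorVec (y : EuclideanSpace ℝ ι) : ι → ℤ := fun i => ⌊y i⌋

lemma measurable_floorVec : Measurable (floorVec : EuclideanSpace ℝ ι → ι → ℤ) := by
  unfold floorVec
  fun_prop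

variable [Fintype ι]

lemma norm_intVec_floorVec_sub_le (y : EuclideanSpace ℝ ι) :
    ‖intVec (floorVec y) - y‖ ≤ √(Fintype.card ι) := by
  rw [EuclideanSpace.norm_eq]
  refine Real.sqrt_le_sqrt ?_
  have hcoord (i : ι) : ‖(intVec (floorVec y) - y) i‖ ^ 2 ≤ 1 := by
    have hfract : (intVec (floorVec y) - y) i = -Int.fract (y i) := by
      rw [← Int.self_sub_floor, neg_sub]
      rfl
    rw [hfract, norm_neg, Real.norm_of_nonneg (Int.fract_nonneg _)]
    exact pow_le_one₀ (Int.fract_nonneg _) (Int.fract_lt_one _).le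
  simpa using Finset.sum_le_sum fun i (_ : i ∈ Finset.univ) => hcoord i

lemma map_floorVec_volume :
    Measure.map (floorVec : EuclideanSpace ℝ ι → ι → ℤ) volume = Measure.count := by
  refine Measure.ext_of_singleton fun k => ?_
  have hpre : floorVec ⁻¹' {k} = (WithLp.ofLp : EuclideanSpace ℝ ι → ι → ℝ) ⁻¹'
      Set.univ.pi fun i => Set.Ico (k i : ℝ) (k i + 1) := by
    ext y
    simp [floorVec, funext_iff, Int.floor_eq_iff]
  rw [Measure.map_apply measurable_floorVec (measurableSet_singleton k), Measure.count_singleton,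
    hpre, (PiLp.volume_preserving_ofLp ι).measure_preimage
      (MeasurableSet.univ_pi fun i => measurableSet_Ico).nullMeasurableSet, Real.volume_pi_Ico]
  simp

lemma integral_comp_floorVec (G : (ι → ℤ) → ℝ) :
    ∫ y : EuclideanSpace ℝ ι, G (floorVec y) = ∑' k, G k := by
  rw [← integral_map (φ := floorVec) measurable_floorVec.aemeasurable
    (measurable_of_countable G).aestronglyMeasurable, map_floorVec_volume]
  by_cases hG : Integrable G Measure.count
  · rw [integral_countable hG]
    simp [Measure.real]
  · rw [integral_undef hG, tsum_eq_zero_of_not_summable]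
    rwa [integrable_count_iff, summable_norm_iff] at hG

lemma integral_comp_floorVec_smul_add (G : (ι → ℤ) → ℝ) {R : ℝ} (hR : 0 < R)
    (a : EuclideanSpace ℝ ι) :
    ∫ u : EuclideanSpace ℝ ι, G (floorVec (R • u + a)) =
      (R ^ Fintype.card ι)⁻¹ * ∑' k, G k := by
  have h := Measure.integral_comp_smul volume
    (fun y : EuclideanSpace ℝ ι => G (floorVec (y + a))) R
  rw [integral_add_right_eq_self (fun y : EuclideanSpace ℝ ι => G (floorVec y)),
    integral_comp_floorVec] at h
  simpa [abs_of_pos (pow_pos hR _)] using h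

lemma integrable_exp_neg_mul_sq_norm {V : Type*} [NormedAddCommGroup V] [InnerProductSpace ℝ V]
    [FiniteDimensional ℝ V] [MeasurableSpace V] [BorelSpace V] {c : ℝ} (hc : 0 < c) :
    Integrable fun u : V => Real.exp (-c * ‖u‖ ^ 2) := by
  refine Integrable.of_integral_ne_zero ?_
  rw [GaussianFourier.integral_rexp_neg_mul_sq_norm hc]
  positivity

lemma exp_neg_mul_sq_norm_le {V : Type*} [SeminormedAddCommGroup V] {c : ℝ} (hc : 0 ≤ c)
    (p u : V) :
    Real.exp (-c * ‖p‖ ^ 2) ≤ Real.exp (c * ‖p - u‖ ^ 2) * Real.exp (-(c / 2) * ‖u‖ ^ 2) := by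
  rw [← Real.exp_add, Real.exp_le_exp]
  have htri : ‖u‖ ≤ ‖p‖ + ‖p - u‖ := by
    simpa [norm_sub_rev] using norm_le_insert p u
  have hsq : ‖u‖ ^ 2 ≤ 2 * (‖p‖ ^ 2 + ‖p - u‖ ^ 2) :=
    (pow_le_pow_left₀ (norm_nonneg u) htri 2).trans add_sq_le
  nlinarith

theorem tendsto_inv_pow_mul_tsum {α : Type*} {l : Filter α} [l.IsCountablyGenerated]
    {R : α → ℝ} (hR : Tendsto R l atTop) (a : α → EuclideanSpace ℝ ι)
    {g : α → (ι → ℤ) → ℝ} {h : EuclideanSpace ℝ ι → ℝ} {C c : ℝ} (hc : 0 < c)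
    (hdom : ∀ᶠ n in l, ∀ k, |g n k| ≤ C * Real.exp (-c * ‖(R n)⁻¹ • (intVec k - a n)‖ ^ 2))
    (hlim : ∀ u (k : α → ι → ℤ), Tendsto (fun n => (R n)⁻¹ • (intVec (k n) - a n)) l (𝓝 u) →
      Tendsto (fun n => g n (k n)) l (𝓝 (h u))) :
    Tendsto (fun n => (R n ^ Fintype.card ι)⁻¹ * ∑' k, g n k) l (𝓝 (∫ u, h u)) := by
  set K : ℝ := √(Fintype.card ι)
  let k (n : α) (u : EuclideanSpace ℝ ι) : ι → ℤ := floorVec (R n • u + a n)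
  let p (n : α) (u : EuclideanSpace ℝ ι) : EuclideanSpace ℝ ι :=
    (R n)⁻¹ • (intVec (k n u) - a n)
  have hclose {n : α} (hn : 1 ≤ R n) (u) : ‖p n u - u‖ ≤ (R n)⁻¹ * K := by
    have hsub : p n u - u = (R n)⁻¹ • (intVec (k n u) - (R n • u + a n)) := by
      rw [← sub_sub, sub_right_comm, smul_sub _ (_ - _), inv_smul_smul₀ (by positivity)]
    rw [hsub, norm_smul, norm_inv, Real.norm_of_nonneg (by positivity)]
    gcongr
    exact norm_intVec_floorVec_sub_le _
  have hintegral : ∀ᶠ n in l, ∫ u, g n (k n u) =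
      (R n ^ Fintype.card ι)⁻¹ * ∑' k, g n k :=
    (hR.eventually_gt_atTop 0).mono fun n hn => integral_comp_floorVec_smul_add (g n) hn (a n)
  refine Tendsto.congr' hintegral (tendsto_integral_filter_of_dominated_convergence
    (fun u => |C| * (Real.exp (c * K ^ 2) * Real.exp (-(c / 2) * ‖u‖ ^ 2))) ?_ ?_ ?_ ?_)
  · refine Eventually.of_forall fun n => Measurable.aestronglyMeasurable ?_
    exact (measurable_of_countable (g n)).comp
      (measurable_floorVec.comp ((measurable_const_smul (R n)).add_const (a n)))
  · filter_upwards [hdom, hR.eventually_ge_atTop 1] with n hn hRn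
    refine Eventually.of_forall fun u => (hn (k n u)).trans ?_
    have hK : ‖p n u - u‖ ≤ K := (hclose hRn u).trans
      (mul_le_of_le_one_left (Real.sqrt_nonneg _) (inv_le_one_of_one_le₀ hRn))
    calc C * Real.exp (-c * ‖p n u‖ ^ 2) ≤ |C| * Real.exp (-c * ‖p n u‖ ^ 2) := by
          gcongr; exact le_abs_self C
      _ ≤ |C| * (Real.exp (c * ‖p n u - u‖ ^ 2) * Real.exp (-(c / 2) * ‖u‖ ^ 2)) := by
          gcongr; exact exp_neg_mul_sq_norm_le hc.le _ _
      _ ≤ _ := by gcongr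
  · exact ((integrable_exp_neg_mul_sq_norm (by positivity)).const_mul _).const_mul _
  · refine Eventually.of_forall fun u => hlim u _ ?_
    rw [tendsto_iff_norm_sub_tendsto_zero]
    refine squeeze_zero' (Eventually.of_forall fun n => norm_nonneg _)
      ((hR.eventually_ge_atTop 1).mono fun n hn => hclose hn u) ?_
    simpa using hR.inv_tendsto_atTop.mul_const K

end LatticeSums

section Taylor

variable {V W : Type*} [NormedAddCommGroup V] [NormedSpace ℝ V] [NormedAddCommGroup W]
  [NormedSpace ℝ W]

lemma hasFDerivAt_taylor_two {F : V → W} {z p : V} (D : V →L[ℝ] V →L[ℝ] W)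
    (hF : DifferentiableAt ℝ F (z + p)) (hD : ∀ a b, D a b = D b a) :
    HasFDerivAt (fun q => F (z + q) - fderiv ℝ F z q - (1 / 2 : ℝ) • D q q)
      (fderiv ℝ F (z + p) - fderiv ℝ F z - D p) p := by
  have hshift : HasFDerivAt (fun q => F (z + q)) (fderiv ℝ F (z + p)) p :=
    (hasFDerivAt_comp_add_left z).2 hF.hasFDerivAt
  have hquad : HasFDerivAt (fun q => (1 / 2 : ℝ) • D q q) (D p) p := by
    refine ((D.hasFDerivAt.clm_apply (hasFDerivAt_id p)).const_smul (1 / 2 : ℝ)).congr_fderiv ?_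
    ext q
    simp [hD q p, ← add_smul, ← two_mul]
  exact (hshift.sub (fderiv ℝ F z).hasFDerivAt).sub hquad

lemma isLittleO_taylor_two {F : V → W} {z : V} (hF : ContDiffAt ℝ 2 F z) :
    (fun q => F (z + q) - F z - fderiv ℝ F z q - (1 / 2 : ℝ) • fderiv ℝ (fderiv ℝ F) z q q)
      =o[𝓝 0] fun q => ‖q‖ ^ 2 := by
  set D := fderiv ℝ (fderiv ℝ F) z
  have hD : ∀ a b, D a b = D b a := hF.isSymmSndFDerivAt (by simp)
  have hdiff : DifferentiableAt ℝ (fderiv ℝ F) z :=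
    (hF.fderiv_right (m := 1) (by norm_num)).differentiableAt (by norm_num)
  have hF' : ∀ᶠ x in 𝓝 z, DifferentiableAt ℝ F x :=
    (hF.eventually (by simp)).mono fun x hx => hx.differentiableAt (by norm_num)
  refine Asymptotics.isLittleO_iff.2 fun δ hδ => ?_
  obtain ⟨r, hr, hball⟩ :=
    Metric.eventually_nhds_iff.1 ((hdiff.hasFDerivAt.isLittleO.def hδ).and hF')
  filter_upwards [Metric.ball_mem_nhds (0 : V) hr] with q hq
  have hnear : ∀ p ∈ Metric.closedBall (0 : V) ‖q‖, dist (z + p) z < r := fun p hp => by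
    simpa using (mem_closedBall_zero_iff.1 hp).trans_lt (mem_ball_zero_iff.1 hq)
  have hgrad : ∀ p ∈ Metric.closedBall (0 : V) ‖q‖,
      ‖fderiv ℝ F (z + p) - fderiv ℝ F z - D p‖ ≤ δ * ‖q‖ := fun p hp => by
    have h := (hball (hnear p hp)).1
    rw [add_sub_cancel_left] at h
    exact h.trans (by gcongr; exact mem_closedBall_zero_iff.1 hp)
  have h := (convex_closedBall (0 : V) ‖q‖).norm_image_sub_le_of_norm_hasFDerivWithin_le
    (fun p hp => (hasFDerivAt_taylor_two D (hball (hnear p hp)).2 hD).hasFDerivWithinAt)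
    hgrad (x := 0) (y := q) (by simp) (by simp)
  simp only [add_zero, map_zero, smul_zero, sub_zero] at h
  calc _ = ‖F (z + q) - fderiv ℝ F z q - (1 / 2 : ℝ) • D q q - F z‖ := by
        congr 1; abel
    _ ≤ δ * ‖q‖ * ‖q‖ := h
    _ = δ * ‖‖q‖ ^ 2‖ := by simp [pow_two, mul_assoc]

/-- The increment of `F` at `z`, blown up by `s` in space and by `s ^ 2` in value: for `s = √N` it
is the exponent `N (F x - F z)` of the Gibbs weight, as a function of `p = √N (x - z)`. -/
def blowup (F : V → ℝ) (z : V) (s : ℝ) (p : V) : ℝ := s ^ 2 * (F (z + s⁻¹ • p) - F z)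

lemma exists_abs_blowup_sub_le {F : V → ℝ} {z : V} (hF : ContDiffAt ℝ 2 F z)
    (hz : fderiv ℝ F z = 0) {δ : ℝ} (hδ : 0 < δ) :
    ∃ r > 0, ∀ s : ℝ, s ≠ 0 → ∀ p : V, ‖s⁻¹ • p‖ < r →
      |blowup F z s p - 1 / 2 * fderiv ℝ (fderiv ℝ F) z p p| ≤ δ * ‖p‖ ^ 2 := by
  obtain ⟨r, hr, h⟩ := Metric.eventually_nhds_iff.1 ((isLittleO_taylor_two hF).def hδ)
  refine ⟨r, hr, fun s hs p hp => ?_⟩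
  set D := fderiv ℝ (fderiv ℝ F) z
  have hscale : blowup F z s p - 1 / 2 * D p p =
      s ^ 2 * (F (z + s⁻¹ • p) - F z - fderiv ℝ F z (s⁻¹ • p) -
        (1 / 2 : ℝ) • D (s⁻¹ • p) (s⁻¹ • p)) := by
    simp only [hz, blowup, _root_.zero_apply, map_smul, _root_.smul_apply, smul_eq_mul]
    field_simp
    ring
  calc |blowup F z s p - 1 / 2 * D p p| ≤ s ^ 2 * (δ * ‖‖s⁻¹ • p‖ ^ 2‖) := by
        rw [hscale, abs_mul, abs_of_nonneg (sq_nonneg s)]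
        exact mul_le_mul_of_nonneg_left (h (by simpa using hp)) (sq_nonneg s)
    _ = δ * ‖p‖ ^ 2 := by
        rw [norm_pow, norm_norm, norm_smul, mul_pow, norm_inv, inv_pow, Real.norm_eq_abs s, sq_abs]
        field_simp

lemma tendsto_blowup {F : V → ℝ} {z : V} (hF : ContDiffAt ℝ 2 F z) (hz : fderiv ℝ F z = 0)
    {α : Type*} {l : Filter α} {s : α → ℝ} {p : α → V} {u : V} (hs : Tendsto s l atTop)
    (hp : Tendsto p l (𝓝 u)) :
    Tendsto (fun n => blowup F z (s n) (p n)) l (𝓝 (1 / 2 * fderiv ℝ (fderiv ℝ F) z u u)) := by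
  have hcont : Continuous fun q => 1 / 2 * fderiv ℝ (fderiv ℝ F) z q q := by fun_prop
  have hscaled : Tendsto (fun n => ‖(s n)⁻¹ • p n‖) l (𝓝 0) := by
    simpa using (hs.inv_tendsto_atTop.smul hp).norm
  have hrem : (fun n => blowup F z (s n) (p n) - 1 / 2 * fderiv ℝ (fderiv ℝ F) z (p n) (p n))
      =o[l] fun n => ‖p n‖ ^ 2 := by
    refine Asymptotics.isLittleO_iff.2 fun δ hδ => ?_
    obtain ⟨r, hr, h⟩ := exists_abs_blowup_sub_le hF hz hδ
    filter_upwards [hs.eventually_gt_atTop 0, hscaled.eventually_lt_const hr] with n hn hpn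
    simpa using h (s n) hn.ne' (p n) hpn
  have hzero := (Asymptotics.isLittleO_one_iff ℝ).1
    (hrem.trans_isBigO ((hp.norm.pow 2).isBigO_one ℝ))
  simpa using hzero.add ((hcont.tendsto u).comp hp)

end Taylor

section GaussianProfile

lemma tendsto_mul_sub_of_hasStrictDerivAt {f : ℝ → ℝ} {f' a₀ : ℝ}
    (hf : HasStrictDerivAt f f' a₀) {α : Type*} {l : Filter α} {s a : α → ℝ}
    (hs : Tendsto s l atTop) (ha : Tendsto a l (𝓝 a₀)) (h : ℝ) :
    Tendsto (fun n => s n * (f (a n + (s n)⁻¹ * h) - f (a n))) l (𝓝 (f' * h)) := by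
  have hshift : Tendsto (fun n => a n + (s n)⁻¹ * h) l (𝓝 a₀) := by
    simpa using ha.add (hs.inv_tendsto_atTop.mul_const h)
  have hrem : (fun n => s n * (f (a n + (s n)⁻¹ * h) - f (a n)) - f' * h) =o[l] fun _ => h := by
    refine ((Asymptotics.isBigO_refl s l).mul_isLittleO
      (hf.isLittleO.comp_tendsto (hshift.prodMk_nhds ha))).congr' ?_ ?_
    · filter_upwards [hs.eventually_ne_atTop 0] with n hn
      simp only [ContinuousLinearMap.toSpanSingleton_apply, smul_eq_mul, Function.comp_apply,
        add_sub_cancel_left]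
      field_simp
    · filter_upwards [hs.eventually_ne_atTop 0] with n hn
      simp [hn]
  have hzero : Tendsto (fun n => s n * (f (a n + (s n)⁻¹ * h) - f (a n)) - f' * h) l (𝓝 0) :=
    (Asymptotics.isLittleO_one_iff ℝ).1
      (hrem.trans_isBigO (Asymptotics.isBigO_const_const h one_ne_zero l))
  simpa using hzero.add_const (f' * h)

lemma hasDerivAt_fGauss {c : ℝ} (hc : 0 < c) (r : ℝ) :
    HasDerivAt (fGauss c) (√(c / (2 * π)) * Real.exp (-(c / 2) * r ^ 2)) r := by
  have hint : Integrable fun s : ℝ => Real.exp (-(c / 2) * s ^ 2) :=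
    integrable_exp_neg_mul_sq (by positivity)
  have hcont : Continuous fun s : ℝ => Real.exp (-(c / 2) * s ^ 2) := by fun_prop
  have heq : fGauss c = fun r => √(c / (2 * π)) *
      ((∫ s in Set.Iic 0, Real.exp (-(c / 2) * s ^ 2)) +
        ∫ s in (0 : ℝ)..r, Real.exp (-(c / 2) * s ^ 2)) := by
    funext r
    rw [fGauss, ← integral_Iic_eq_integral_Iio,
      ← intervalIntegral.integral_Iic_sub_Iic hint.integrableOn hint.integrableOn]
    ring
  rw [heq]
  exact ((intervalIntegral.integral_hasDerivAt_right (hcont.intervalIntegrable _ _)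
    (hcont.stronglyMeasurableAtFilter _ _) hcont.continuousAt).const_add _).const_mul _

lemma hasStrictDerivAt_fGauss {c : ℝ} (hc : 0 < c) (r : ℝ) :
    HasStrictDerivAt (fGauss c) (√(c / (2 * π)) * Real.exp (-(c / 2) * r ^ 2)) r :=
  hasStrictDerivAt_of_hasDerivAt_of_continuousAt
    (Eventually.of_forall fun x => hasDerivAt_fGauss hc x) (by fun_prop)

lemma fGauss_sq_mul {s : ℝ} (hs : 0 < s) (c a : ℝ) :
    fGauss (s ^ 2 * c) (s⁻¹ * a) = fGauss c a := by
  have hint := Measure.setIntegral_comp_smul_of_pos volume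
    (fun t : ℝ => Real.exp (-(c / 2) * t ^ 2)) (Set.Iio (s⁻¹ * a)) hs
  rw [LinearOrderedField.smul_Iio hs, smul_eq_mul, mul_inv_cancel_left₀ hs.ne'] at hint
  rw [fGauss, fGauss, mul_div_assoc, Real.sqrt_mul (sq_nonneg s), Real.sqrt_sq hs.le]
  simp only [Module.finrank_self, pow_one, smul_eq_mul, mul_pow] at hint
  have hexp : ∀ t : ℝ, -(s ^ 2 * c / 2) * t ^ 2 = -(c / 2) * (s ^ 2 * t ^ 2) := fun t => by ring
  simp_rw [hexp, hint]
  field_simp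

lemma abs_fGauss_add_sub_le {c : ℝ} (hc : 0 < c) (a h : ℝ) :
    |fGauss c (a + h) - fGauss c a| ≤
      √(c / (2 * π)) * |h| * Real.exp (-(c / 2) * a ^ 2 + c * |a| * |h|) := by
  have hderiv : ∀ ξ ∈ Metric.closedBall a |h|,
      ‖√(c / (2 * π)) * Real.exp (-(c / 2) * ξ ^ 2)‖ ≤
        √(c / (2 * π)) * Real.exp (-(c / 2) * a ^ 2 + c * |a| * |h|) := fun ξ hξ => by
    have hcross : a * (a - ξ) ≤ |a| * |h| := calc
      a * (a - ξ) ≤ |a| * |a - ξ| := (le_abs_self _).trans (abs_mul _ _).le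
      _ ≤ |a| * |h| := by
        rw [abs_sub_comm]
        exact mul_le_mul_of_nonneg_left (mem_closedBall_iff_norm.1 hξ) (abs_nonneg a)
    rw [Real.norm_of_nonneg (by positivity)]
    gcongr
    nlinarith [sq_nonneg (a - ξ)]
  have h := (convex_closedBall a |h|).norm_image_sub_le_of_norm_hasDerivWithin_le
    (fun ξ _ => (hasDerivAt_fGauss hc ξ).hasDerivWithinAt) hderiv
    (Metric.mem_closedBall_self (abs_nonneg h)) (y := a + h) (by simp)
  simpa [mul_right_comm] using h

end GaussianProfile

section QuadraticForms

open scoped Matrix MatrixOrder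

variable {ι : Type*} [Fintype ι]

lemma eq_sum_dotProduct_smul {κ : Type*} [Fintype κ]
    (w : OrthonormalBasis κ ℝ (EuclideanSpace ℝ ι)) (u : ι → ℝ) :
    u = ∑ j, ((w j).ofLp ⬝ᵥ u) • (w j).ofLp := by
  have h := congrArg WithLp.ofLp (w.sum_repr' (WithLp.toLp 2 u))
  simpa [EuclideanSpace.inner_eq_star_dotProduct, dotProduct_comm u] using h.symm

lemma dotProduct_mulVec_eq_sum_of_eigenbasis {κ : Type*} [Fintype κ]
    {w : OrthonormalBasis κ ℝ (EuclideanSpace ℝ ι)} {M : Matrix ι ι ℝ} {l : κ → ℝ}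
    (hw : ∀ j, M *ᵥ (w j).ofLp = l j • (w j).ofLp) (u : ι → ℝ) :
    u ⬝ᵥ M *ᵥ u = ∑ j, l j * ((w j).ofLp ⬝ᵥ u) ^ 2 := by
  have hMu : M *ᵥ u = ∑ j, ((w j).ofLp ⬝ᵥ u) • l j • (w j).ofLp := by
    conv_lhs => rw [eq_sum_dotProduct_smul w u]
    simp only [Matrix.mulVec_sum, Matrix.mulVec_smul, hw]
  rw [hMu, dotProduct_sum]
  refine Finset.sum_congr rfl fun j _ => ?_
  rw [dotProduct_smul, dotProduct_smul, dotProduct_comm u, smul_eq_mul, smul_eq_mul]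
  ring

lemma dotProduct_mulVec_pos_of_eigenbasis {κ : Type*} [Fintype κ]
    {w : OrthonormalBasis κ ℝ (EuclideanSpace ℝ ι)} {M : Matrix ι ι ℝ} {l : κ → ℝ}
    (hw : ∀ j, M *ᵥ (w j).ofLp = l j • (w j).ofLp) {j₀ : κ} (hl : ∀ j ≠ j₀, 0 < l j)
    {u : ι → ℝ} (hu : u ≠ 0) (hu₀ : (w j₀).ofLp ⬝ᵥ u = 0) : 0 < u ⬝ᵥ M *ᵥ u := by
  rw [dotProduct_mulVec_eq_sum_of_eigenbasis hw]
  obtain ⟨k, hk⟩ : ∃ k, (w k).ofLp ⬝ᵥ u ≠ 0 := by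
    by_contra! h
    exact hu (by rw [eq_sum_dotProduct_smul w u]; simp [h])
  refine Finset.sum_pos' (fun j _ => ?_) ⟨k, Finset.mem_univ k, ?_⟩
  · rcases eq_or_ne j j₀ with rfl | hj
    · simp [hu₀]
    · have := hl j hj
      positivity
  · have := hl k fun h => hk (h ▸ hu₀)
    positivity

lemma posDef_add_two_mul_vecMulVec {M : Matrix ι ι ℝ} {v : ι → ℝ} {t : ℝ} (hM : M.IsHermitian)
    (ht : 0 < t) (hv : v ⬝ᵥ v = 1) (hMv : M *ᵥ v = -t • v)
    (hpos : ∀ u ≠ 0, v ⬝ᵥ u = 0 → 0 < u ⬝ᵥ M *ᵥ u) :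
    (M + (2 * t) • Matrix.vecMulVec v v).PosDef := by
  have hvv : (Matrix.vecMulVec v v).IsHermitian := by
    simpa using (Matrix.posSemidef_vecMulVec_self_star v).isHermitian
  refine Matrix.PosDef.of_dotProduct_mulVec_pos
    (hM.add (hvv.smul (IsSelfAdjoint.all _))) fun u hu => ?_
  obtain ⟨a, q, hvq, rfl⟩ : ∃ (a : ℝ) (q : ι → ℝ), v ⬝ᵥ q = 0 ∧ u = q + a • v :=
    ⟨v ⬝ᵥ u, u - (v ⬝ᵥ u) • v, by simp [dotProduct_sub, hv], by simp⟩
  have hvMq : v ⬝ᵥ M *ᵥ q = 0 := by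
    rw [Matrix.dotProduct_mulVec, ← Matrix.mulVec_transpose,
      ← Matrix.conjTranspose_eq_transpose_of_trivial, hM.eq, hMv, smul_dotProduct, hvq, smul_zero]
  have hform : star (q + a • v) ⬝ᵥ (M + (2 * t) • Matrix.vecMulVec v v) *ᵥ (q + a • v) =
      q ⬝ᵥ M *ᵥ q + t * a ^ 2 := by
    simp only [star_trivial, Matrix.mulVec_add, Matrix.add_mulVec, Matrix.smul_mulVec,
      Matrix.vecMulVec_mulVec, hvq, MulOpposite.op_zero, zero_smul, smul_zero, add_zero,
      Matrix.mulVec_smul, hMv, neg_smul, hv, MulOpposite.op_one, one_smul, smul_add, smul_neg,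
      dotProduct_add, add_dotProduct, smul_dotProduct, hvMq, smul_eq_mul, mul_zero,
      dotProduct_neg, dotProduct_smul, dotProduct_comm q v, mul_one, zero_add]
    ring
  rw [hform]
  rcases eq_or_ne q 0 with rfl | hq
  · have : a ≠ 0 := fun ha => hu (by simp [ha])
    simp only [Matrix.mulVec_zero, dotProduct_zero, zero_add]
    positivity
  · have := hpos q hq hvq
    positivity

lemma exists_sq_norm_eq_of_posDef [DecidableEq ι] {A : Matrix ι ι ℝ} (hA : A.PosDef) :
    ∃ L : EuclideanSpace ℝ ι →ₗ[ℝ] EuclideanSpace ℝ ι,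
      (∀ u, ‖L u‖ ^ 2 = u.ofLp ⬝ᵥ A *ᵥ u.ofLp) ∧ LinearMap.det L ^ 2 = A.det := by
  obtain ⟨B, rfl⟩ := CStarAlgebra.nonneg_iff_eq_star_mul_self.1 hA.posSemidef.nonneg
  refine ⟨B.toEuclideanLin, fun u => ?_, ?_⟩
  · rw [← real_inner_self_eq_norm_sq, EuclideanSpace.inner_eq_star_dotProduct,
      Matrix.ofLp_toLpLin, Matrix.toLin'_apply, star_trivial, ← Matrix.mulVec_mulVec,
      Matrix.dotProduct_mulVec u.ofLp, Matrix.star_eq_conjTranspose,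
      Matrix.conjTranspose_eq_transpose_of_trivial, Matrix.vecMul_transpose]
  · rw [Matrix.toEuclideanLin_eq_toLin_orthonormal, LinearMap.det_toLin, Matrix.det_mul,
      Matrix.star_eq_conjTranspose, Matrix.det_conjTranspose, star_trivial, pow_two]

lemma exists_mul_sq_norm_le_of_posDef {A : Matrix ι ι ℝ} (hA : A.PosDef) :
    ∃ κ > 0, ∀ u : EuclideanSpace ℝ ι, κ * ‖u‖ ^ 2 ≤ u.ofLp ⬝ᵥ A *ᵥ u.ofLp := by
  classical
  obtain ⟨L, hL, hdet⟩ := exists_sq_norm_eq_of_posDef hA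
  have hker : LinearMap.ker L = ⊥ := by
    have hdet_ne : LinearMap.det L ≠ 0 := fun h => hA.det_pos.ne' (by rw [← hdet, h]; simp)
    exact (LinearMap.equivOfDetNeZero L hdet_ne).ker
  obtain ⟨K, hK, hlip⟩ := L.exists_antilipschitzWith hker
  have : 0 < (K : ℝ) := hK
  refine ⟨((K : ℝ) ^ 2)⁻¹, by positivity, fun u => ?_⟩
  rw [← hL u, inv_mul_le_iff₀ (by positivity), ← mul_pow]
  exact pow_le_pow_left₀ (norm_nonneg u) (by simpa using hlip.le_mul_dist u 0) 2

variable [DecidableEq ι]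

lemma integral_exp_neg_half_dotProduct_mulVec {A : Matrix ι ι ℝ} (hA : A.PosDef) :
    ∫ u : EuclideanSpace ℝ ι, Real.exp (-(1 / 2) * (u.ofLp ⬝ᵥ A *ᵥ u.ofLp)) =
      √(2 * π) ^ Fintype.card ι / √A.det := by
  obtain ⟨L, hL, hdet⟩ := exists_sq_norm_eq_of_posDef hA
  have hdet_ne : LinearMap.det L ≠ 0 := fun h => hA.det_pos.ne' (by rw [← hdet, h]; simp)
  have hcont : Continuous L := L.continuous_of_finiteDimensional
  calc ∫ u : EuclideanSpace ℝ ι, Real.exp (-(1 / 2) * (u.ofLp ⬝ᵥ A *ᵥ u.ofLp))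
      = ∫ u, Real.exp (-(1 / 2) * ‖L u‖ ^ 2) := by simp only [hL]
    _ = ∫ y, Real.exp (-(1 / 2) * ‖y‖ ^ 2) ∂(Measure.map L volume) :=
        (integral_map hcont.aemeasurable (f := fun y => Real.exp (-(1 / 2) * ‖y‖ ^ 2))
          (Continuous.aestronglyMeasurable (by fun_prop))).symm
    _ = √(2 * π) ^ Fintype.card ι / √A.det := by
        rw [Measure.map_linearMap_addHaar_eq_smul_addHaar volume hdet_ne, integral_smul_measure,
          GaussianFourier.integral_rexp_neg_mul_sq_norm (by norm_num), ← hdet, Real.sqrt_sq_eq_abs,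
          ENNReal.toReal_ofReal (abs_nonneg _), abs_inv, finrank_euclideanSpace,
          Real.rpow_div_two_eq_sqrt _ (by positivity), Real.rpow_natCast, smul_eq_mul,
          inv_mul_eq_div, div_div_eq_mul_div, mul_comm π, div_one]

/-- If `v` is a unit eigenvector of `M` with eigenvalue `-t`, then `M + 2t vvᵀ` is the product of
`M` and the reflection `1 - 2vvᵀ`. -/
lemma det_add_two_mul_vecMulVec {R : Type*} [CommRing R] {M : Matrix ι ι R} {v : ι → R} {t : R}
    (hv : v ⬝ᵥ v = 1) (hM : M *ᵥ v = -t • v) :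
    (M + (2 * t) • Matrix.vecMulVec v v).det = -M.det := by
  have hfactor : M + (2 * t) • Matrix.vecMulVec v v =
      M * (1 + Matrix.vecMulVec ((-2 : R) • v) v) := by
    rw [mul_add, mul_one, Matrix.mul_vecMulVec, Matrix.mulVec_smul, hM, smul_smul,
      Matrix.smul_vecMulVec]
    ring_nf
  rw [hfactor, Matrix.det_mul, Matrix.vecMulVec_eq Unit,
    Matrix.det_one_add_replicateCol_mul_replicateRow, dotProduct_smul, hv, smul_eq_mul]
  ring

end QuadraticForms

section EdgeDensity

lemma sq_mul_fGauss_sub_le {c s : ℝ} (hc : 0 < c) (hs : 1 ≤ s) (a h : ℝ) :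
    (s * (fGauss c (a + s⁻¹ * h) - fGauss c a)) ^ 2 ≤
      c / (2 * π) * h ^ 2 * (Real.exp (-(c / 2) * a ^ 2 + c * |h| * |a|) *
        Real.exp (-(c / 2) * (a + s⁻¹ * h) ^ 2 + c * |h| * |a + s⁻¹ * h|)) := by
  set b := a + s⁻¹ * h
  have hs0 : 0 < s := by positivity
  have hstep : |s⁻¹ * h| ≤ |h| := by
    rw [abs_mul, abs_of_pos (inv_pos.2 hs0)]
    exact mul_le_of_le_one_left (abs_nonneg h) (inv_le_one_of_one_le₀ hs)
  have hbound (x k : ℝ) (hk : |k| = |s⁻¹ * h|) : |s * (fGauss c (x + k) - fGauss c x)| ≤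
      √(c / (2 * π)) * |h| * Real.exp (-(c / 2) * x ^ 2 + c * |h| * |x|) := calc
    _ ≤ s * (√(c / (2 * π)) * |k| * Real.exp (-(c / 2) * x ^ 2 + c * |x| * |k|)) := by
      rw [abs_mul, abs_of_pos hs0]
      exact mul_le_mul_of_nonneg_left (abs_fGauss_add_sub_le hc x k) hs0.le
    _ = √(c / (2 * π)) * |h| * Real.exp (-(c / 2) * x ^ 2 + c * |x| * |k|) := by
      rw [hk, abs_mul, abs_of_pos (inv_pos.2 hs0)]
      field_simp
    _ ≤ _ := by
      rw [mul_right_comm c |h|, hk]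
      gcongr
  have ha := hbound a (s⁻¹ * h) rfl
  have hb := hbound b (-(s⁻¹ * h)) (abs_neg _)
  rw [add_neg_cancel_right, ← abs_neg, ← mul_neg, neg_sub] at hb
  calc (s * (fGauss c b - fGauss c a)) ^ 2
      = |s * (fGauss c b - fGauss c a)| * |s * (fGauss c b - fGauss c a)| := by
        rw [abs_mul_abs_self, pow_two]
    _ ≤ _ := mul_le_mul ha hb (abs_nonneg _) (by positivity)
    _ = √(c / (2 * π)) ^ 2 * |h| ^ 2 * (Real.exp (-(c / 2) * a ^ 2 + c * |h| * |a|) *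
        Real.exp (-(c / 2) * b ^ 2 + c * |h| * |b|)) := by ring
    _ = _ := by rw [Real.sq_sqrt (by positivity), sq_abs]

variable {V : Type*} [NormedAddCommGroup V] [InnerProductSpace ℝ V]

/-- In the coordinate `p = s (x - z)`, the contribution of the edge `(x, x + s⁻² e)` to the
Dirichlet form of a Gaussian profile in the direction `v`, up to the factors which depend neither
on `x` nor on `e`. -/
def edgeDensity (F : V → ℝ) (z v e : V) (c s : ℝ) (p : V) : ℝ :=
  Real.exp (-(1 / 2) * (blowup F z s p + blowup F z s (p + s⁻¹ • e))) *
    (s * (fGauss c ⟪v, p + s⁻¹ • e⟫ - fGauss c ⟪v, p⟫)) ^ 2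

variable {F : V → ℝ} {z v e : V} {c : ℝ}

lemma inv_smul_smul_sub_add {s : ℝ} (hs : s ≠ 0) (x z e : V) :
    s⁻¹ • (s • (x - z) + s⁻¹ • e) = x + (s ^ 2)⁻¹ • e - z := by
  rw [smul_add, inv_smul_smul₀ hs, smul_smul, ← mul_inv, ← pow_two, sub_add_eq_add_sub]

lemma edgeDensity_smul_sub {s : ℝ} (hs : 0 < s) (x : V) :
    edgeDensity F z v e c s (s • (x - z)) =
      Real.exp (-(1 / 2) * (s ^ 2 * (F x - F z) + s ^ 2 * (F (x + (s ^ 2)⁻¹ • e) - F z))) *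
        (s * (fGauss (s ^ 2 * c) ⟪v, x + (s ^ 2)⁻¹ • e - z⟫ -
          fGauss (s ^ 2 * c) ⟪v, x - z⟫)) ^ 2 := by
  have hprofile (p : V) : fGauss c ⟪v, p⟫ = fGauss (s ^ 2 * c) ⟪v, s⁻¹ • p⟫ := by
    rw [real_inner_smul_right, fGauss_sq_mul hs]
  simp only [edgeDensity, blowup, hprofile, inv_smul_smul₀ hs.ne', inv_smul_smul_sub_add hs.ne',
    add_sub_cancel]

lemma tendsto_edgeDensity (hF : ContDiffAt ℝ 2 F z) (hz : fderiv ℝ F z = 0) (hc : 0 < c)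
    {α : Type*} {l : Filter α} {s : α → ℝ} {p : α → V} {u : V} (hs : Tendsto s l atTop)
    (hp : Tendsto p l (𝓝 u)) :
    Tendsto (fun n => edgeDensity F z v e c (s n) (p n)) l
      (𝓝 (c / (2 * π) * ⟪v, e⟫ ^ 2 *
        Real.exp (-(1 / 2) * (fderiv ℝ (fderiv ℝ F) z u u + 2 * c * ⟪v, u⟫ ^ 2)))) := by
  have hstep : Tendsto (fun n => p n + (s n)⁻¹ • e) l (𝓝 u) := by
    simpa using hp.add (hs.inv_tendsto_atTop.smul_const e)
  have hweight := Real.continuous_exp.continuousAt.tendsto.comp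
    (((tendsto_blowup hF hz hs hp).add (tendsto_blowup hF hz hs hstep)).const_mul (-(1 / 2)))
  have hslope := (tendsto_mul_sub_of_hasStrictDerivAt (hasStrictDerivAt_fGauss hc ⟪v, u⟫) hs
    (tendsto_const_nhds.inner hp) ⟪v, e⟫).pow 2
  set D := fderiv ℝ (fderiv ℝ F) z u u
  have hexp : Real.exp (-(1 / 2) * (D + 2 * c * ⟪v, u⟫ ^ 2)) =
      Real.exp (-(1 / 2) * (1 / 2 * D + 1 / 2 * D)) * Real.exp (-(c / 2) * ⟪v, u⟫ ^ 2) ^ 2 := by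
    rw [← Real.exp_nat_mul, ← Real.exp_add]
    push_cast
    ring_nf
  convert hweight.mul hslope using 2
  · simp [edgeDensity, inner_add_right, real_inner_smul_right]
  · rw [hexp, mul_pow, mul_pow, Real.sq_sqrt (by positivity)]
    ring

lemma exists_siteWeight_le (hF : ContDiffAt ℝ 2 F z) (hz : fderiv ℝ F z = 0) {κ : ℝ} (hκ : 0 < κ)
    (hcoer : ∀ u, κ * ‖u‖ ^ 2 ≤ fderiv ℝ (fderiv ℝ F) z u u + 2 * c * ⟪v, u⟫ ^ 2) (b : ℝ) :
    ∃ r > 0, ∃ C, ∀ s : ℝ, s ≠ 0 → ∀ q : V, ‖s⁻¹ • q‖ < r →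
      Real.exp (-(1 / 2) * blowup F z s q + (-(c / 2) * ⟪v, q⟫ ^ 2 + b * |⟪v, q⟫|)) ≤
        C * Real.exp (-(κ / 8) * ‖q‖ ^ 2) := by
  obtain ⟨r, hr, htaylor⟩ := exists_abs_blowup_sub_le hF hz (δ := κ / 8) (by positivity)
  refine ⟨r, hr, Real.exp (4 * (|b| * ‖v‖) ^ 2 / κ), fun s hs q hq => ?_⟩
  rw [← Real.exp_add, Real.exp_le_exp]
  have hlin : b * |⟪v, q⟫| ≤ |b| * ‖v‖ * ‖q‖ := calc
    b * |⟪v, q⟫| ≤ |b| * (‖v‖ * ‖q‖) :=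
      mul_le_mul (le_abs_self b) (abs_real_inner_le_norm v q) (abs_nonneg _) (abs_nonneg b)
    _ = _ := (mul_assoc _ _ _).symm
  have hyoung : |b| * ‖v‖ * ‖q‖ ≤ 4 * (|b| * ‖v‖) ^ 2 / κ + κ / 16 * ‖q‖ ^ 2 := by
    rw [← sub_nonneg]
    have : 4 * (|b| * ‖v‖) ^ 2 / κ + κ / 16 * ‖q‖ ^ 2 - |b| * ‖v‖ * ‖q‖ =
        (8 * (|b| * ‖v‖) - κ * ‖q‖) ^ 2 / (16 * κ) := by
      field_simp
      ring
    rw [this]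
    positivity
  linarith [(abs_le.1 (htaylor s hs q hq)).1, hcoer q]

lemma exists_edgeDensity_le (hF : ContDiffAt ℝ 2 F z) (hz : fderiv ℝ F z = 0) (hc : 0 < c)
    {κ : ℝ} (hκ : 0 < κ)
    (hcoer : ∀ u, κ * ‖u‖ ^ 2 ≤ fderiv ℝ (fderiv ℝ F) z u u + 2 * c * ⟪v, u⟫ ^ 2) :
    ∃ r > 0, ∃ C, ∀ s : ℝ, 1 ≤ s → ∀ p : V, ‖s⁻¹ • p‖ < r → ‖s⁻¹ • (p + s⁻¹ • e)‖ < r →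
      |edgeDensity F z v e c s p| ≤ C * Real.exp (-(κ / 8) * ‖p‖ ^ 2) := by
  obtain ⟨r, hr, C, hsite⟩ := exists_siteWeight_le hF hz hκ hcoer (c * |⟪v, e⟫|)
  refine ⟨r, hr, c / (2 * π) * ⟪v, e⟫ ^ 2 * (C * C), fun s hs p hp hp' => ?_⟩
  set p' := p + s⁻¹ • e with hp'_def
  have hinner : ⟪v, p'⟫ = ⟪v, p⟫ + s⁻¹ * ⟪v, e⟫ := by
    rw [hp'_def, inner_add_right, real_inner_smul_right]
  have hs0 : s ≠ 0 := by positivity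
  have hC : 0 ≤ C := by
    refine nonneg_of_mul_nonneg_left (LE.le.trans ?_ (hsite s hs0 p hp)) (Real.exp_pos _)
    positivity
  have hfar : Real.exp (-(κ / 8) * ‖p'‖ ^ 2) ≤ 1 := by
    rw [Real.exp_le_one_iff]
    nlinarith [sq_nonneg ‖p'‖]
  let W (q : V) : ℝ :=
    Real.exp (-(1 / 2) * blowup F z s q + (-(c / 2) * ⟪v, q⟫ ^ 2 + c * |⟪v, e⟫| * |⟪v, q⟫|))
  calc |edgeDensity F z v e c s p| = edgeDensity F z v e c s p :=
        abs_of_nonneg (by unfold edgeDensity; positivity)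
    _ ≤ Real.exp (-(1 / 2) * (blowup F z s p + blowup F z s p')) *
        (c / (2 * π) * ⟪v, e⟫ ^ 2 *
          (Real.exp (-(c / 2) * ⟪v, p⟫ ^ 2 + c * |⟪v, e⟫| * |⟪v, p⟫|) *
            Real.exp (-(c / 2) * ⟪v, p'⟫ ^ 2 + c * |⟪v, e⟫| * |⟪v, p'⟫|))) := by
        rw [edgeDensity, hinner]
        gcongr
        exact sq_mul_fGauss_sub_le hc hs _ _
    _ = c / (2 * π) * ⟪v, e⟫ ^ 2 * (W p * W p') := by
        simp only [W, mul_add (-(1 / 2) : ℝ), Real.exp_add]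
        ring
    _ ≤ c / (2 * π) * ⟪v, e⟫ ^ 2 * (C * Real.exp (-(κ / 8) * ‖p‖ ^ 2) * (C * 1)) := by
        gcongr
        · exact hsite s hs0 p hp
        · exact (hsite s hs0 p' hp').trans (by gcongr)
    _ = c / (2 * π) * ⟪v, e⟫ ^ 2 * (C * C) * Real.exp (-(κ / 8) * ‖p‖ ^ 2) := by ring

end EdgeDensity

section Hessian

open scoped Matrix

lemma fderiv_fderiv_eq_dotProduct_hess (F : E d → ℝ) (z u : E d) :
    fderiv ℝ (fderiv ℝ F) z u u = u.ofLp ⬝ᵥ hess F z *ᵥ u.ofLp := by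
  have hu : u = ∑ i, u i • EuclideanSpace.single i (1 : ℝ) := by
    simpa using ((EuclideanSpace.basisFun (Fin d) ℝ).sum_repr u).symm
  conv_lhs => rw [hu]
  simp only [map_sum, map_smul, _root_.sum_apply, _root_.smul_apply, smul_eq_mul, dotProduct,
    Matrix.mulVec, hess, iteratedFDeriv_two_apply, Matrix.cons_val_zero, Matrix.cons_val_one,
    Finset.mul_sum]
  rw [Finset.sum_comm]
  exact Finset.sum_congr rfl fun i _ => Finset.sum_congr rfl fun k _ => by ring

lemma isHermitian_hess {F : E d → ℝ} {z : E d} (hF : ContDiffAt ℝ 2 F z) :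
    (hess F z).IsHermitian := by
  refine Matrix.IsHermitian.ext fun i j => ?_
  simp only [hess, iteratedFDeriv_two_apply, Matrix.cons_val_zero, Matrix.cons_val_one,
    star_trivial]
  exact hF.isSymmSndFDerivAt (by simp) _ _

lemma inner_eq_dotProduct (v u : E d) : ⟪v, u⟫ = v.ofLp ⬝ᵥ u.ofLp := by
  rw [EuclideanSpace.inner_eq_star_dotProduct, star_trivial, dotProduct_comm]

lemma inner_sub_eq_sum (v x z : E d) : ⟪v, x - z⟫ = ∑ i, (x i - z i) * v i := by
  simp [PiLp.inner_apply]

lemma fderiv_fderiv_add_two_mul_sq_inner (F : E d → ℝ) (z v u : E d) (t : ℝ) :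
    fderiv ℝ (fderiv ℝ F) z u u + 2 * t * ⟪v, u⟫ ^ 2 =
      u.ofLp ⬝ᵥ (hess F z + (2 * t) • Matrix.vecMulVec v.ofLp v.ofLp) *ᵥ u.ofLp := by
  rw [fderiv_fderiv_eq_dotProduct_hess, inner_eq_dotProduct, Matrix.add_mulVec, dotProduct_add,
    Matrix.smul_mulVec, Matrix.vecMulVec_mulVec, dotProduct_smul]
  rw [op_smul_eq_smul, dotProduct_smul, dotProduct_comm u.ofLp v.ofLp, smul_eq_mul, smul_eq_mul]
  ring

end Hessian

section Mesoscopic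

/-- Neighbourhoods `B N` of `z` in the lattices `Ξ_N` which shrink to `z` more slowly than
`N^{-1/2}`, the scale on which the Gibbs weights vary around a critical point. -/
structure IsMesoscopic (Ξ : Set (E d)) (z : E d) (B : ℕ → Set (E d)) : Prop where
  subset_disc : ∀ N, B N ⊆ disc Ξ N
  tendsto_smallSets : Tendsto B atTop (𝓝 z).smallSets
  eventually_mem : ∀ R : ℝ, ∀ᶠ N : ℕ in atTop, ∀ x ∈ disc Ξ N, √N * ‖x - z‖ ≤ R → x ∈ B N

lemma isMesoscopic_box (Ξ : Set (E d)) (z : E d) {ι : Type*} [Fintype ι]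
    (b : OrthonormalBasis ι ℝ (E d)) {c : ι → ℝ} (hc : ∀ j, 0 < c j) {ε : ℕ → ℝ}
    (hε : Tendsto ε atTop (𝓝 0)) (hNε : Tendsto (fun N : ℕ => √N * ε N) atTop atTop) :
    IsMesoscopic Ξ z fun N => {x ∈ disc Ξ N | ∀ j, |⟪b j, x - z⟫| ≤ c j * ε N} where
  subset_disc N := Set.sep_subset _ _
  tendsto_smallSets := by
    rw [Metric.nhds_basis_ball.smallSets.tendsto_right_iff]
    intro r hr
    have hdiam : Tendsto (fun N => ∑ j, c j * ε N) atTop (𝓝 0) := by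
      simpa using tendsto_finsetSum Finset.univ fun j _ => hε.const_mul (c j)
    filter_upwards [hdiam.eventually_lt_const hr] with N hN x hx
    rw [mem_ball_iff_norm]
    calc ‖x - z‖ = ‖∑ j, ⟪b j, x - z⟫ • b j‖ := by rw [b.sum_repr']
      _ ≤ ∑ j, ‖⟪b j, x - z⟫ • b j‖ := norm_sum_le _ _
      _ = ∑ j, |⟪b j, x - z⟫| := by simp [norm_smul]
      _ ≤ ∑ j, c j * ε N := Finset.sum_le_sum fun j _ => hx.2 j
      _ < r := hN
  eventually_mem R := by
    have hside (j : ι) : ∀ᶠ N : ℕ in atTop, R ≤ c j * (√N * ε N) :=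
      (hNε.const_mul_atTop (hc j)).eventually_ge_atTop R
    filter_upwards [eventually_all.2 hside, eventually_gt_atTop 0] with N hN hN0 x hx hxR
    refine ⟨hx, fun j => ?_⟩
    have hs : 0 < √(N : ℝ) := by positivity
    rw [← mul_le_mul_iff_right₀ hs, mul_left_comm]
    calc √N * |⟪b j, x - z⟫| ≤ √N * ‖x - z‖ := by
          gcongr
          simpa using abs_real_inner_le_norm (b j) (x - z)
      _ ≤ c j * (√N * ε N) := hxR.trans (hN j)

lemma isMesoscopic_saddleBox (Ξ : Set (E d)) (z : E d) {ι : Type*} [Fintype ι]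
    (b : OrthonormalBasis ι ℝ (E d)) {j₀ : ι} {c : ι → ℝ} (hc : ∀ j ≠ j₀, 0 < c j) {ε : ℕ → ℝ}
    (hε : Tendsto ε atTop (𝓝 0)) (hNε : Tendsto (fun N : ℕ => √N * ε N) atTop atTop) :
    IsMesoscopic Ξ z fun N => {x ∈ disc Ξ N | |⟪b j₀, x - z⟫| ≤ ε N ∧
      ∀ j ≠ j₀, |⟪b j, x - z⟫| ≤ c j * ε N} := by
  have hc' : ∀ j, 0 < Function.update c j₀ 1 j := by
    rw [Function.forall_update_iff c fun _ t => 0 < t]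
    exact ⟨one_pos, hc⟩
  have hsides (N : ℕ) (x : E d) := Function.forall_update_iff c (a := j₀) (b := 1)
    fun j t => |⟪b j, x - z⟫| ≤ t * ε N
  simpa only [hsides, one_mul] using isMesoscopic_box Ξ z b hc' hε hNε

lemma tendsto_zero_of_tendsto_rpow_mul {ε : ℕ → ℝ} {a : ℝ} (ha : 0 ≤ a)
    (h : Tendsto (fun N : ℕ => (N : ℝ) ^ a * ε N) atTop (𝓝 0)) : Tendsto ε atTop (𝓝 0) := by
  refine squeeze_zero_norm' ?_ (norm_zero (E := ℝ) ▸ h.norm)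
  filter_upwards [eventually_ge_atTop 1] with N hN
  rw [norm_mul]
  refine le_mul_of_one_le_left (norm_nonneg _) ((Real.one_le_rpow ?_ ha).trans (le_abs_self _))
  exact_mod_cast hN

end Mesoscopic

section DirichletForm

variable {Ξ : Set (E d)} {F : E d → ℝ} {z v : E d} {μ : ℝ} {N : ℕ}

lemma isLatticePoint_iff_mem_range {x : E d} :
    IsLatticePoint N x ↔ x ∈ Set.range fun k : Fin d → ℤ => (N : ℝ)⁻¹ • intVec k := by
  constructor
  · intro hx
    choose k hk using hx
    exact ⟨k, by ext i; simp [hk i, intVec, div_eq_inv_mul]⟩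
  · rintro ⟨k, rfl⟩ i
    exact ⟨k i, by simp [intVec, div_eq_inv_mul]⟩

lemma tsum_eq_tsum_indicator_intVec (hN : 0 < N) {B : Set (E d)} (hB : B ⊆ disc Ξ N)
    (f : E d → ℝ) :
    ∑' x : B, f x = ∑' k : Fin d → ℤ, B.indicator f ((N : ℝ)⁻¹ • intVec k) := by
  have hinj : Function.Injective fun k : Fin d → ℤ => ((N : ℝ)⁻¹ • intVec k : E d) := by
    intro k l h
    have hkl := smul_right_injective (E d) (inv_ne_zero (Nat.cast_ne_zero.2 hN.ne')) h
    funext i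
    simpa [intVec] using congrArg (fun x : E d => x i) hkl
  rw [tsum_subtype, ← hinj.tsum_eq]
  exact fun x hx => isLatticePoint_iff_mem_range.1 (hB (Set.mem_of_indicator_ne_zero hx)).2

lemma finite_disc (hΞ : Bornology.IsBounded Ξ) (hN : 0 < N) : (disc Ξ N).Finite := by
  obtain ⟨R, hR⟩ := hΞ.exists_norm_le
  have hN' : (0 : ℝ) < N := by exact_mod_cast hN
  refine ((Set.finite_Icc (fun _ : Fin d => -⌈N * R⌉) (fun _ => ⌈N * R⌉)).image
    fun k => (N : ℝ)⁻¹ • intVec k).subset ?_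
  rintro x ⟨hxΞ, hx⟩
  obtain ⟨k, rfl⟩ := isLatticePoint_iff_mem_range.1 hx
  have hk (i : Fin d) : |k i| ≤ ⌈N * R⌉ := by
    have h := (PiLp.norm_apply_le _ i).trans (hR _ hxΞ)
    rw [PiLp.smul_apply, norm_smul, norm_inv, Real.norm_natCast, inv_mul_le_iff₀ hN'] at h
    have h' : ((|k i| : ℤ) : ℝ) ≤ ⌈N * R⌉ := by simpa [intVec] using h.trans (Int.le_ceil _)
    exact_mod_cast h'
  exact ⟨k, ⟨fun i => (abs_le.1 (hk i)).1, fun i => (abs_le.1 (hk i)).2⟩, rfl⟩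

lemma Z_pos (hΞ : Bornology.IsBounded Ξ) (F : E d → ℝ) (hN : 0 < N) {x : E d}
    (hx : x ∈ disc Ξ N) : 0 < Z Ξ F N := by
  have := (finite_disc hΞ hN).to_subtype
  exact Summable.of_finite.tsum_pos (fun _ => (Real.exp_pos _).le) ⟨x, hx⟩ (Real.exp_pos _)

lemma gibbs_mul_rate {x y : E d} (hx : x ∈ disc Ξ N) (hy : y ∈ disc Ξ N)
    (hxy : ‖y - x‖ = 1 / N) :
    gibbs Ξ F N x * rate Ξ F N x y = Real.exp (-(1 / 2) * (N * F x + N * F y)) / Z Ξ F N := by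
  rw [gibbs, rate, if_pos ⟨hx, hy, hxy⟩, div_mul_eq_mul_div, ← Real.exp_add]
  congr 2
  ring

lemma isLatticePoint_add_single {x : E d} (hx : IsLatticePoint N x) (i : Fin d) :
    IsLatticePoint N (x + (N : ℝ)⁻¹ • EuclideanSpace.single i (1 : ℝ)) := by
  obtain ⟨k, rfl⟩ := isLatticePoint_iff_mem_range.1 hx
  refine isLatticePoint_iff_mem_range.2 ⟨k + Pi.single i 1, ?_⟩
  ext j
  by_cases hij : j = i <;> simp [hij, intVec, mul_add]

lemma gibbs_mul_rate_mul_sq (hN : 0 < N) {x e : E d} (hx : x ∈ disc Ξ N)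
    (hxe : x + (N : ℝ)⁻¹ • e ∈ disc Ξ N) (he : ‖e‖ = 1) :
    gibbs Ξ F N x * rate Ξ F N x (x + (N : ℝ)⁻¹ • e) *
        (fGauss (N * μ) ⟪v, x + (N : ℝ)⁻¹ • e - z⟫ - fGauss (N * μ) ⟪v, x - z⟫) ^ 2 =
      (Z Ξ F N * N * Real.exp (N * F z))⁻¹ * edgeDensity F z v e μ (√N) (√N • (x - z)) := by
  have hN' : (0 : ℝ) < N := by exact_mod_cast hN
  have hexp : Real.exp (-(1 / 2) * (N * F x + N * F (x + (N : ℝ)⁻¹ • e))) * Real.exp (N * F z) =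
      Real.exp (-(1 / 2) * (N * (F x - F z) + N * (F (x + (N : ℝ)⁻¹ • e) - F z))) := by
    rw [← Real.exp_add]
    ring_nf
  rw [gibbs_mul_rate hx hxe (by simp [norm_smul, he]), edgeDensity_smul_sub (Real.sqrt_pos.2 hN'),
    Real.sq_sqrt hN'.le, ← hexp, mul_pow, Real.sq_sqrt hN'.le]
  field_simp

end DirichletForm

section Limit

open scoped Matrix

lemma tendsto_sqrt_natCast_atTop : Tendsto (fun N : ℕ => √(N : ℝ)) atTop atTop :=
  Real.tendsto_sqrt_atTop.comp tendsto_natCast_atTop_atTop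

variable {Ξ : Set (E d)} {F : E d → ℝ} {z v e : E d} {μ : ℝ} {B : ℕ → Set (E d)}

lemma IsMesoscopic.eventually_mem_and_add_mem (hB : IsMesoscopic Ξ z B) {U : Set (E d)}
    (hU : U ∈ 𝓝 z) (e : E d) :
    ∀ᶠ N : ℕ in atTop, ∀ x ∈ B N, x ∈ U ∧ x + (N : ℝ)⁻¹ • e ∈ U := by
  have hadd : ContinuousAt (fun p : ℝ × E d => p.2 + p.1 • e) (0, z) := by fun_prop
  have hU' : U ∈ 𝓝 (z + (0 : ℝ) • e) := by simpa using hU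
  obtain ⟨T, hT, S, hS, hTS⟩ := mem_nhds_prod_iff.1 (hadd.preimage_mem_nhds hU')
  filter_upwards [tendsto_smallSets_iff.1 hB.tendsto_smallSets _ (inter_mem hS hU),
    (tendsto_inv_atTop_nhds_zero_nat (𝕜 := ℝ)).eventually hT] with N hBN hN x hx
  exact ⟨(hBN hx).2, hTS (Set.mk_mem_prod hN (hBN hx).1)⟩

lemma IsMesoscopic.eventually_mem_of_tendsto (hB : IsMesoscopic Ξ z B) (hΞ : Ξ ∈ 𝓝 z)
    {x : ℕ → E d} (hx : ∀ N, IsLatticePoint N (x N)) {u : E d}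
    (hu : Tendsto (fun N : ℕ => √N • (x N - z)) atTop (𝓝 u)) : ∀ᶠ N in atTop, x N ∈ B N := by
  have hxz : Tendsto x atTop (𝓝 z) := by
    have h := (tendsto_sqrt_natCast_atTop.inv_tendsto_atTop.smul hu).add_const z
    rw [zero_smul, zero_add] at h
    refine h.congr' ?_
    filter_upwards [eventually_gt_atTop 0] with N hN
    have hs : √(N : ℝ) ≠ 0 := by positivity
    simp [inv_smul_smul₀ hs]
  filter_upwards [hB.eventually_mem (‖u‖ + 1), hxz.eventually hΞ,
    hu.norm.eventually_lt_const (lt_add_one ‖u‖)] with N hmem hΞN hN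
  refine hmem (x N) ⟨hΞN, hx N⟩ ?_
  rw [norm_smul, Real.norm_of_nonneg (Real.sqrt_nonneg _)] at hN
  exact hN.le

lemma IsMesoscopic.exists_eventually_edgeDensity_le (hB : IsMesoscopic Ξ z B)
    (hF : ContDiffAt ℝ 2 F z) (hz : fderiv ℝ F z = 0) (hμ : 0 < μ) {κ : ℝ} (hκ : 0 < κ)
    (hcoer : ∀ u, κ * ‖u‖ ^ 2 ≤ fderiv ℝ (fderiv ℝ F) z u u + 2 * μ * ⟪v, u⟫ ^ 2) :
    ∃ C, ∀ᶠ N : ℕ in atTop, ∀ x ∈ B N, |edgeDensity F z v e μ (√N) (√N • (x - z))| ≤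
      C * Real.exp (-(κ / 8) * ‖√N • (x - z)‖ ^ 2) := by
  obtain ⟨r, hr, C, hC⟩ := exists_edgeDensity_le (e := e) hF hz hμ hκ hcoer
  refine ⟨C, ?_⟩
  filter_upwards [hB.eventually_mem_and_add_mem (Metric.ball_mem_nhds z hr) e,
    eventually_ge_atTop 1] with N hball hN x hx
  have hs : 1 ≤ √(N : ℝ) := by simpa using hN
  have hs0 : √(N : ℝ) ≠ 0 := by positivity
  obtain ⟨hx, hxe⟩ := hball x hx
  rw [mem_ball_iff_norm] at hx hxe
  refine hC _ hs _ ?_ ?_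
  · rwa [inv_smul_smul₀ hs0]
  · rwa [inv_smul_smul_sub_add hs0, Real.sq_sqrt N.cast_nonneg]

lemma tendsto_tsum_edgeDensity (hΞ : Ξ ∈ 𝓝 z) (hF : ContDiffAt ℝ 2 F z) (hz : fderiv ℝ F z = 0)
    (hμ : 0 < μ) {κ : ℝ} (hκ : 0 < κ)
    (hcoer : ∀ u, κ * ‖u‖ ^ 2 ≤ fderiv ℝ (fderiv ℝ F) z u u + 2 * μ * ⟪v, u⟫ ^ 2)
    (hB : IsMesoscopic Ξ z B) (e : E d) :
    Tendsto (fun N : ℕ => (√N ^ d)⁻¹ *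
        ∑' x : B N, edgeDensity F z v e μ (√N) (√N • ((x : E d) - z))) atTop
      (𝓝 (∫ u, μ / (2 * π) * ⟪v, e⟫ ^ 2 *
        Real.exp (-(1 / 2) * (fderiv ℝ (fderiv ℝ F) z u u + 2 * μ * ⟪v, u⟫ ^ 2)))) := by
  have hcoord (N : ℕ) (k : Fin d → ℤ) : (√(N : ℝ))⁻¹ • (intVec k - (N : ℝ) • z) =
      √(N : ℝ) • ((N : ℝ)⁻¹ • intVec k - z) := by
    rw [smul_sub, smul_sub, smul_smul, smul_smul, inv_mul_eq_div, Real.div_sqrt,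
      ← div_eq_mul_inv, Real.sqrt_div_self', one_div]
  obtain ⟨C, hC⟩ := hB.exists_eventually_edgeDensity_le (e := e) hF hz hμ hκ hcoer
  let h (N : ℕ) (x : E d) : ℝ := edgeDensity F z v e μ (√N) (√N • (x - z))
  have hlim := tendsto_inv_pow_mul_tsum (ι := Fin d) tendsto_sqrt_natCast_atTop
    (fun N : ℕ => (N : ℝ) • z)
    (g := fun N k => (B N).indicator (h N) ((N : ℝ)⁻¹ • intVec k)) (C := |C|) (c := κ / 8)
    (h := fun u => μ / (2 * π) * ⟪v, e⟫ ^ 2 *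
      Real.exp (-(1 / 2) * (fderiv ℝ (fderiv ℝ F) z u u + 2 * μ * ⟪v, u⟫ ^ 2)))
    (by positivity) ?_ ?_
  · refine hlim.congr' ?_
    filter_upwards [eventually_gt_atTop 0] with N hN
    rw [Fintype.card_fin, tsum_eq_tsum_indicator_intVec hN (hB.subset_disc N) (h N)]
  · filter_upwards [hC] with N hN k
    rw [hcoord]
    by_cases hk : (N : ℝ)⁻¹ • intVec k ∈ B N
    · rw [Set.indicator_of_mem hk]
      exact (hN _ hk).trans (by gcongr; exact le_abs_self C)
    · rw [Set.indicator_of_notMem hk, abs_zero]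
      positivity
  · intro u k hu
    simp only [hcoord] at hu
    refine (tendsto_edgeDensity hF hz hμ tendsto_sqrt_natCast_atTop hu).congr' ?_
    filter_upwards [hB.eventually_mem_of_tendsto hΞ
      (fun N => isLatticePoint_iff_mem_range.2 ⟨k N, rfl⟩) hu] with N hN
    rw [Set.indicator_of_mem hN]

lemma Z_mul_dirichletRestricted (hΞ : Bornology.IsBounded Ξ) {N : ℕ} (hN : 0 < N) {D : Set (E d)}
    (hD : D ⊆ disc Ξ N)
    (hDe : ∀ i, ∀ x ∈ D, x + (N : ℝ)⁻¹ • EuclideanSpace.single i (1 : ℝ) ∈ Ξ) :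
    Z Ξ F N * N * Real.exp (N * F z) *
        dirichletRestricted Ξ F N (fun x => fGauss (N * μ) ⟪v, x - z⟫) D =
      ∑ i, ∑' x : D, edgeDensity F z v (EuclideanSpace.single i 1) μ (√N)
        (√N • ((x : E d) - z)) := by
  rw [dirichletRestricted, Finset.mul_sum]
  refine Finset.sum_congr rfl fun i _ => ?_
  rw [← tsum_mul_left]
  refine tsum_congr fun x => ?_
  have hx := hD x.2
  have hZ := Z_pos hΞ F hN hx
  rw [gibbs_mul_rate_mul_sq hN hx ⟨hDe i x x.2, isLatticePoint_add_single hx.2 i⟩ (by simp),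
    mul_inv_cancel_left₀ (by positivity)]

lemma sum_sq_inner_single (v : E d) : ∑ i, ⟪v, EuclideanSpace.single i (1 : ℝ)⟫ ^ 2 = ‖v‖ ^ 2 := by
  simp [EuclideanSpace.norm_sq_eq, EuclideanSpace.inner_single_right]

lemma tendsto_dirichletRestricted (hΞ : Bornology.IsBounded Ξ) (hzΞ : Ξ ∈ 𝓝 z)
    (hF : ContDiffAt ℝ 2 F z) (hz : fderiv ℝ F z = 0) (hμ : 0 < μ)
    (hpos : (hess F z + (2 * μ) • Matrix.vecMulVec v.ofLp v.ofLp).PosDef)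
    (hB : IsMesoscopic Ξ z B) :
    Tendsto (fun N : ℕ => Z Ξ F N / (2 * π * N) ^ ((d : ℝ) / 2) * (2 * π * N) *
        Real.exp (N * F z) *
        dirichletRestricted Ξ F N (fun x => fGauss (N * μ) ⟪v, x - z⟫) (B N)) atTop
      (𝓝 (μ * ‖v‖ ^ 2 / √(hess F z + (2 * μ) • Matrix.vecMulVec v.ofLp v.ofLp).det)) := by
  have hform := fderiv_fderiv_add_two_mul_sq_inner F z v (t := μ)
  obtain ⟨κ, hκ, hcoer⟩ := exists_mul_sq_norm_le_of_posDef hpos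
  simp only [← hform] at hcoer
  have hlim := (tendsto_finsetSum Finset.univ fun i _ =>
    tendsto_tsum_edgeDensity hzΞ hF hz hμ hκ hcoer hB (EuclideanSpace.single i 1)).const_mul
      (2 * π / √(2 * π) ^ d)
  have : √(2 * π) ≠ 0 := by positivity
  convert hlim.congr' ?_ using 2
  · simp_rw [integral_const_mul, hform, integral_exp_neg_half_dotProduct_mulVec hpos]
    rw [← Finset.sum_mul, ← Finset.mul_sum, sum_sq_inner_single, Fintype.card_fin]
    field_simp
  · have hedge := eventually_all.2 fun i : Fin d =>
      hB.eventually_mem_and_add_mem hzΞ (EuclideanSpace.single i 1)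
    filter_upwards [hedge, eventually_gt_atTop 0] with N hN hN0
    rw [← Finset.mul_sum,
      ← Z_mul_dirichletRestricted hΞ hN0 (hB.subset_disc N) fun i x hx => (hN i x hx).2,
      Real.rpow_div_two_eq_sqrt _ (by positivity), Real.rpow_natCast,
      Real.sqrt_mul (show 0 ≤ 2 * π by positivity), mul_pow]
    field_simp

lemma exists_eq_one_add_mul_of_tendsto {a : ℕ → ℝ} {ω : ℝ} (hω : ω ≠ 0)
    (ha : Tendsto a atTop (𝓝 ω)) :
    ∃ err : ℕ → ℝ, Tendsto err atTop (𝓝 0) ∧ ∀ N, a N = (1 + err N) * ω :=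
  ⟨fun N => a N / ω - 1, by simpa [div_self hω] using (ha.div_const ω).sub_const 1,
    fun N => by rw [add_sub_cancel, div_mul_cancel₀ _ hω]⟩

theorem dirichlet_form_test_function_general (hΞ : Bornology.IsBounded Ξ) (hzΞ : Ξ ∈ 𝓝 z)
    (hF : ContDiffAt ℝ 2 F z) (hz : fderiv ℝ F z = 0) (hμ : 0 < μ) (hv : ‖v‖ = 1)
    (hv_eigen : hess F z *ᵥ v.ofLp = -μ • v.ofLp)
    (hpos : ∀ u ≠ 0, v.ofLp ⬝ᵥ u = 0 → 0 < u ⬝ᵥ hess F z *ᵥ u) (hB : IsMesoscopic Ξ z B) :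
    ∃ err : ℕ → ℝ, Tendsto err atTop (𝓝 0) ∧ ∀ N : ℕ,
      Z Ξ F N / (2 * π * N) ^ ((d : ℝ) / 2) * (2 * π * N) * Real.exp (N * F z) *
        dirichletRestricted Ξ F N (fun x => fGauss (N * μ) ⟪v, x - z⟫) (B N)
      = (1 + err N) * (μ / √(-(hess F z).det)) := by
  have hvv : v.ofLp ⬝ᵥ v.ofLp = 1 := by
    rw [← inner_eq_dotProduct, real_inner_self_eq_norm_sq, hv, one_pow]
  have hdet := det_add_two_mul_vecMulVec hvv hv_eigen
  have hposDef := posDef_add_two_mul_vecMulVec (isHermitian_hess hF) hμ hvv hv_eigen hpos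
  have hlim := tendsto_dirichletRestricted hΞ hzΞ hF hz hμ hposDef hB
  have hdet_pos := hposDef.det_pos
  rw [hv, one_pow, mul_one, hdet] at hlim
  rw [hdet] at hdet_pos
  exact exists_eq_one_add_mul_of_tendsto (by positivity) hlim

end Limit

section Saddle

lemma exists_orthonormalBasis_coe_eq {w : Fin d → E d}
    (hw : ∀ j k, ∑ i, w j i * w k i = if j = k then 1 else 0) :
    ∃ b : OrthonormalBasis (Fin d) ℝ (E d), ⇑b = w := by
  have hon : Orthonormal ℝ w := by
    simpa [orthonormal_iff_ite, PiLp.inner_apply, mul_comm] using hw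
  have hspan := hon.linearIndependent.span_eq_top_of_card_eq_finrank' (by simp)
  exact ⟨OrthonormalBasis.mk hon hspan.ge, OrthonormalBasis.coe_mk hon hspan.ge⟩

end Saddle

/-- **Assertion 3.2 (vs02).**  If `N^{-1/2} ≪ ε_N ≪ N^{-1/3}`, then
`(Z_N/(2πN)^{d/2}) 2πN e^{N F(z)} D_N(V_N; B_N) = [1+o_N(1)] μ/√(-det Hess F(z))`,
where `B_N` is the mesoscopic box around the saddle point `z` and
`V_N(x) = f_N((x-z)·v)`. -/
theorem dirichlet_form_test_function (d : ℕ) [NeZero d] (P : PotentialSetting d)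
    (z : E d) (hz : z ∈ saddles P.Ξ P.F)
    (w : Fin d → E d) (lam' : Fin d → ℝ)
    (hw_eigen : ∀ j i : Fin d,
      (∑ k : Fin d, hess P.F z i k * w j k) = lam' j * w j i)
    (hw_on : ∀ j k : Fin d, (∑ i : Fin d, w j i * w k i) = if j = k then 1 else 0)
    (hlam0 : lam' 0 = -(P.μs z))
    (hlam_pos : ∀ j : Fin d, j ≠ 0 → 0 < lam' j)
    (εs : ℕ → ℝ) (hεpos : ∀ N, 0 < εs N)
    (hε1 : Filter.Tendsto (fun N : ℕ => Real.sqrt N * εs N) Filter.atTop Filter.atTop)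
    (hε2 : Filter.Tendsto (fun N : ℕ => (N : ℝ) ^ ((1:ℝ)/3) * εs N) Filter.atTop (𝓝 0)) :
    ∃ err : ℕ → ℝ, Filter.Tendsto err Filter.atTop (𝓝 0) ∧ ∀ N : ℕ,
      Z P.Ξ P.F N / (2 * π * N) ^ ((d : ℝ) / 2) * (2 * π * N) * Real.exp (N * P.F z) *
        dirichletRestricted P.Ξ P.F N
          (fun x => fGauss ((N : ℝ) * P.μs z) (∑ i : Fin d, (x i - z i) * w 0 i))
          {x ∈ disc P.Ξ N | |∑ i : Fin d, (x i - z i) * w 0 i| ≤ εs N ∧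
            ∀ j : Fin d, j ≠ 0 →
              |∑ i : Fin d, (x i - z i) * w j i| ≤ 2 * Real.sqrt (P.μs z / lam' j) * εs N}
      = (1 + err N) * (P.μs z / Real.sqrt (-(hess P.F z).det)) := by
  have hzΞ : P.Ξ ∈ 𝓝 z := P.isOpen.mem_nhds hz.1
  have hF : ContDiffAt ℝ 2 P.F z :=
    P.smooth.contDiffAt (Filter.mem_of_superset hzΞ subset_closure)
  have hμ : 0 < P.μs z := (P.saddleHess z hz).1
  have heigen (j : Fin d) : (hess P.F z).mulVec (w j).ofLp = lam' j • (w j).ofLp :=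
    funext fun i => hw_eigen j i
  obtain ⟨b, rfl⟩ := exists_orthonormalBasis_coe_eq hw_on
  have hside (j : Fin d) (hj : j ≠ 0) : 0 < 2 * √(P.μs z / lam' j) := by
    have := hlam_pos j hj
    positivity
  have hB := isMesoscopic_saddleBox P.Ξ z b hside
    (tendsto_zero_of_tendsto_rpow_mul (by norm_num) hε2) hε1
  simp only [← inner_sub_eq_sum]
  exact dirichlet_form_test_function_general P.isBounded hzΞ hF hz.2.1 hμ (b.norm_eq_one 0)
    (hlam0 ▸ heigen 0) (fun u => dotProduct_mulVec_pos_of_eigenbasis heigen hlam_pos) hB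

end RWPotential
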